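/- arXiv:2309.08518 — 2 statements merged into one kernel-verified Lean document; each statement's English description precedes it below -/
import Mathlib

section
/- For sentences I=(w_1,…,w_k) and J=(v_1,…,v_h), the right perp operator acts on the complete homogeneous basis of NSym_A by M_I^⊸(H_J) = Σ_K H_{(J/_R K)~}, where the sum runs over all weak sentences K such that K̃ = I and K ⊆_R J, and (J/_R K)~ denotes the flattening of the weak sentence J/_R K. -/
open scoped BigOperators

namespace ColoredImm

variable {A : Type*}

/-- A *weak sentence* over the alphabet `A`: a finite list of words (words may be empty). -/
abbrev Sentence (A : Type*) := List (List A)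

/-- A genuine *sentence*: all of its words are nonempty. -/
def IsSentence (I : Sentence A) : Prop := ∀ w ∈ I, w ≠ []

/-- The size `|I|` of a sentence: its total number of letters. -/
def size (I : Sentence A) : ℕ := (I.map List.length).sum

/-- The word lengths `wℓ(I)` of a sentence. -/
def wl (I : Sentence A) : List ℕ := I.map List.length

/-- The flattening of a weak sentence: delete all empty words. -/
def flattenWS (I : Sentence A) : Sentence A := I.filter (fun w => !w.isEmpty)

/-- `Refines J I` means `J ⪯ I`: the sentence `I` can be obtained by concatenating
some adjacent words of `J` (so `J` is a refinement of `I`, and `I` a coarsening of `J`). -/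
def Refines (J I : Sentence A) : Prop :=
  ∃ P : List (Sentence A), (∀ p ∈ P, p ≠ []) ∧ P.flatten = J ∧ P.map List.flatten = I

/-! ### Fillings and colored immaculate tableaux -/

/-- An integer filling of a diagram, recorded row by row. -/
abbrev Filling := List (List ℕ)

/-- The entry of a filling at box `b = (row, column)` (0-indexed), with default `0`. -/
def entryAt (f : Filling) (b : ℕ × ℕ) : ℕ := (f.getD b.1 []).getD b.2 0

/-- `IsCIT I f`: `f` is a colored immaculate tableau of shape `I`; that is, `f` has the
same shape as the colored composition diagram of `I`, its entries are positive integers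
weakly increasing left to right along each row, and the entries in the first column are
strictly increasing from top to bottom. -/
def IsCIT (I : Sentence A) (f : Filling) : Prop :=
  f.map List.length = I.map List.length ∧
  (∀ row ∈ f, row.Chain' (· ≤ ·)) ∧
  (f.filterMap List.head?).Chain' (· < ·) ∧
  (∀ x ∈ f.flatten, 1 ≤ x)

/-- The colors (letters of `w`) of the boxes of one row whose entry (in `row`) is `v`,
read from left to right. -/
def rowWith (w : List A) (row : List ℕ) (v : ℕ) : List A :=
  ((w.zip row).filter (fun p => p.2 == v)).map Prod.fst

/-- The word of the type of a tableau at value `v`: the colors of all boxes with entry `v`,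
read left to right, from the bottom row up to the top row. -/
def typeWord (I : Sentence A) (f : Filling) (v : ℕ) : List A :=
  (((I.zip f).reverse).map (fun p => rowWith p.1 p.2 v)).flatten

/-- `HasType I f B` : the tableau `f` (of shape `I`) has type the weak sentence `B`,
i.e. for every positive integer `v`, the colors of the boxes of `f` containing `v`
(read left to right, bottom to top) form the `v`-th word of `B`. -/
def HasType (I : Sentence A) (f : Filling) (B : Sentence A) : Prop :=
  ∀ v, 1 ≤ v → typeWord I f v = B.getD (v - 1) []

/-- `K_{J,B}`: the number of colored immaculate tableaux of shape `J` and type `B`. -/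
noncomputable def KJB (J B : Sentence A) : ℕ :=
  Set.ncard {f : Filling | IsCIT J f ∧ HasType J f B}

/-! ### Standardization -/

/-- The list of boxes of a filling. -/
def boxes (f : Filling) : List (ℕ × ℕ) :=
  ((List.range f.length).map
    (fun r => (List.range (f.getD r []).length).map (fun j => (r, j)))).flatten

/-- `beforeB f b b'`: box `b` comes strictly before box `b'` in the type-reading order of `f`
(smaller entries first; among equal entries, lower rows first, and within a row left to right). -/
def beforeB (f : Filling) (b b' : ℕ × ℕ) : Bool :=
  entryAt f b < entryAt f b' ||
    (entryAt f b == entryAt f b' && (b'.1 < b.1 || (b.1 == b'.1 && b.2 < b'.2)))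

/-- The standardization of a filling: each box is renumbered (starting from `1`)
according to its position in the type-reading order. -/
def stdFill (f : Filling) : Filling :=
  (List.range f.length).map (fun r =>
    (List.range (f.getD r []).length).map (fun j =>
      1 + ((boxes f).filter (fun b' => beforeB f b' (r, j))).length))

/-- The number of boxes of a filling. -/
def nBoxes (f : Filling) : ℕ := f.flatten.length

/-- A filling of `n` boxes is standard when its entries are exactly `1, …, n`,
each appearing once. -/
def IsStandardF (f : Filling) : Prop := f.flatten.Perm (List.range' 1 (nBoxes f))

/-! ### Descents and the colored descent composition -/

/-- The (0-indexed) row containing the value `v` in a standard filling. -/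
def rowOf (f : Filling) (v : ℕ) : ℕ := f.findIdx (fun row => row.contains v)

/-- The sorted list of descents of a standard filling: those `i` with `1 ≤ i ≤ n-1`
such that `i+1` lies in a strictly lower row than `i`. -/
def descList (f : Filling) : List ℕ :=
  (List.range' 1 (nBoxes f - 1)).filter (fun i => decide (rowOf f i < rowOf f (i + 1)))

/-- The composition of `n` associated to a set of split positions `d_1 < … < d_k`:
`(d_1, d_2 - d_1, …, n - d_k)`. -/
def compOf (ds : List ℕ) (n : ℕ) : List ℕ :=
  List.zipWith (fun a b => b - a) (0 :: ds) (ds ++ [n])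

/-- Split a word into a sentence according to a composition. -/
def splitByComp : List A → List ℕ → List (List A)
  | _, [] => []
  | w, a :: rest => w.take a :: splitByComp (w.drop a) rest

/-- The color of the box containing the value `v` in a standard filling of shape `I`. -/
def colorOf [Inhabited A] (I : Sentence A) (f : Filling) (v : ℕ) : A :=
  (I.getD (rowOf f v) []).getD ((f.getD (rowOf f v) []).findIdx (fun x => x == v)) default

/-- The maximal word of the colored descent composition of a standard filling of shape `I`:
the colors of its boxes read in the order of their integer entries. -/
def readWord [Inhabited A] (I : Sentence A) (f : Filling) : List A :=
  (List.range (nBoxes f)).map (fun i => colorOf I f (i + 1))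

/-- The colored descent composition `co_A(U)` of a standard colored immaculate tableau:
read the colors of the boxes in the order of their entries, starting a new word
immediately after each descent. -/
def coA [Inhabited A] (I : Sentence A) (f : Filling) : Sentence A :=
  if nBoxes f = 0 then [] else splitByComp (readWord I f) (compOf (descList f) (nBoxes f))

/-- `L_{J,C}`: the number of standard colored immaculate tableaux of shape `J`
with colored descent composition `C`. -/
noncomputable def LJC [Inhabited A] (J C : Sentence A) : ℕ :=
  Set.ncard {f : Filling | IsCIT J f ∧ IsStandardF f ∧ coA J f = C}

/-! ### The colored quasisymmetric functions `QSym_A` -/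

/-- A (normal form of a) monomial in the partially commutative variables `x_{a,i}`:
a pair consisting of the list of words `(w_1, …, w_m)` and the list of (strictly
increasing, positive) second indices `(j_1 < … < j_m)`, representing
`x_{w_1,j_1} ⋯ x_{w_m,j_m}`. -/
abbrev Mono (A : Type*) := List (List A) × List ℕ

/-- A colored quasisymmetric "series": a formal linear combination of monomials,
recorded by its coefficient function.  `QSym_A` itself is the span of the colored
monomial functions `MQ I` inside this space. -/
abbrev QSymA (A : Type*) := Mono A → ℚ

/-- Validity of a monomial normal form: words and indices match up, the indices are
strictly increasing positive integers, and all words are nonempty. -/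
def ValidMono (m : Mono A) : Prop :=
  m.1.length = m.2.length ∧ m.2.Chain' (· < ·) ∧ (∀ j ∈ m.2, 1 ≤ j) ∧ ∀ w ∈ m.1, w ≠ []

open Classical in
/-- The colored monomial quasisymmetric function `M_I`: the sum of all monomials
`x_{w_1,j_1} ⋯ x_{w_m,j_m}` with `j_1 < … < j_m`, where `I = (w_1, …, w_m)`. -/
noncomputable def MQ (I : Sentence A) : QSymA A := fun m =>
  if m.1 = I ∧ ValidMono m then 1 else 0

/-- The largest entry of a filling. -/
def maxEntry (f : Filling) : ℕ := f.flatten.foldr max 0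

/-- The monomial `x_T` of a colored immaculate tableau `T = f` of shape `I`:
for `T` of type `B = (u_1, …, u_j)` it is `x_{u_1,1} x_{u_2,2} ⋯ x_{u_j,j}`
(empty words are skipped). -/
def monoOf (I : Sentence A) (f : Filling) : Mono A :=
  let vs := ((List.range (maxEntry f)).map (· + 1)).filter (fun v => !(typeWord I f v).isEmpty)
  (vs.map (typeWord I f), vs)

/-- The colored dual immaculate function `𝔖*_J = Σ_T x_T`, the sum of the monomials of all
colored immaculate tableaux `T` of shape `J` (its coefficient at a monomial `m` is the
number of such tableaux with `x_T = m`). -/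
noncomputable def dualImm (J : Sentence A) : QSymA A := fun m =>
  (Set.ncard {f : Filling | IsCIT J f ∧ monoOf J f = m} : ℚ)

/-- The colored fundamental quasisymmetric function `F_I = Σ_{J ⪯ I} M_J`. -/
noncomputable def FQ (I : Sentence A) : QSymA A :=
  ∑ᶠ J ∈ {J : Sentence A | Refines J I}, MQ J

/-! ### The colored immaculate descent graph -/

/-- Edges of the colored immaculate descent graph: a directed edge from `I` to `J` (`J ≠ I`)
whenever some standard colored immaculate tableau of shape `I` has colored descent
composition `J`. -/
def IsEdge [Inhabited A] (I J : Sentence A) : Prop := J ≠ I ∧ LJC I J ≠ 0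

/-- Directed paths from `I` to `K` in the colored immaculate descent graph, recorded by
their (nonempty) lists of successive vertices; the path `[I]` is the empty path at `I`. -/
def PathsFromTo [Inhabited A] (I K : Sentence A) : Set (List (Sentence A)) :=
  {p | p.head? = some I ∧ p.getLast? = some K ∧ p.Chain' IsEdge}

/-- The signed weight `(-1)^{ℓ(𝒫)} prod(𝒫)` of a directed path `𝒫`:
`ℓ(𝒫)` is its number of edges and `prod(𝒫)` the product of its edge weights `L_{I,J}`. -/
noncomputable def pathWeight [Inhabited A] (p : List (Sentence A)) : ℚ :=
  ((-1 : ℚ)) ^ (p.length - 1) * ((p.zip p.tail).map (fun e => (LJC e.1 e.2 : ℚ))).prod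

/-- `L⁻¹_{I,K} = Σ_𝒫 (-1)^{ℓ(𝒫)} prod(𝒫)`, summed over all directed paths `𝒫`
from `I` to `K` in the colored immaculate descent graph. -/
noncomputable def Linv [Inhabited A] (I K : Sentence A) : ℚ :=
  ∑ᶠ p ∈ PathsFromTo I K, pathWeight p

/-! ### The colored noncommutative symmetric functions `NSym_A` -/

/-- A formal series over the complete homogeneous basis `{H_I}` of `NSym_A`, recorded by its
coefficient function on (weak) sentences.  `NSym_A` itself consists of the finitely
supported elements supported on genuine sentences; see `InNSym`. -/
abbrev NSymA (A : Type*) := Sentence A → ℚ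

/-- Membership in `NSym_A` proper: finitely supported, and supported on genuine sentences. -/
def InNSym (f : NSymA A) : Prop :=
  (Function.support f).Finite ∧ ∀ I, f I ≠ 0 → IsSentence I

open Classical in
/-- The colored complete homogeneous noncommutative symmetric function
`H_I = H_{w_1} ⋯ H_{w_k}`. -/
noncomputable def Hd (I : Sentence A) : NSymA A := fun J => if J = I then 1 else 0

/-- `H_w` for a single word `w`, with `H_∅ = 1`. -/
noncomputable def Hw (w : List A) : NSymA A := if w.isEmpty then Hd [] else Hd [w]

/-- Multiplication in `NSym_A` (the concatenation product, extended to series):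
`H_I · H_J = H_{I ⬝ J}`. -/
def mulN (f g : NSymA A) : NSymA A := fun I =>
  ∑ j ∈ Finset.range (I.length + 1), f (I.take j) * g (I.drop j)

/-- The duality pairing `⟨·,·⟩ : NSym_A × QSym_A → ℚ`, determined by
`⟨H_I, M_J⟩ = δ_{I,J}`: the `M_I`-coefficient of a quasisymmetric function is its
coefficient on the monomial `x_{w_1,1} x_{w_2,2} ⋯ x_{w_k,k}`. -/
noncomputable def pairNQ (G : NSymA A) (F : QSymA A) : ℚ :=
  ∑ᶠ I ∈ {I : Sentence A | IsSentence I}, G I * F (I, List.range' 1 I.length)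

/-- All ways of splitting each word of a list of words into a prefix and a suffix. -/
def splitsOf : List (List A) → List (List (List A) × List (List A))
  | [] => [([], [])]
  | w :: ws =>
      (((splitsOf ws).map (fun p =>
        (List.range (w.length + 1)).map (fun t => (w.take t :: p.1, w.drop t :: p.2))))).flatten

/-- Restriction of a candidate monomial: keep only the nonempty words together with
their indices. -/
def restrictMono (ws : List (List A)) (js : List ℕ) : Mono A :=
  let ps := (ws.zip js).filter (fun p => !p.1.isEmpty)
  (ps.map Prod.fst, ps.map Prod.snd)

/-- The product of colored quasisymmetric series: the coefficient of a monomial in `F·G`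
is the sum, over all ways of writing each of its words as a concatenation of a word of a
monomial of `F` (on the left) and a word of a monomial of `G` (on the right), of the
products of the corresponding coefficients. -/
def mulQ (F G : QSymA A) : QSymA A := fun m =>
  ((splitsOf m.1).map (fun p => F (restrictMono p.1 m.2) * G (restrictMono p.2 m.2))).sum

/-- The right perp operator `M^⊸` of `M ∈ QSym_A`, the linear operator on `NSym_A`
determined by `⟨M^⊸(H), G⟩ = ⟨H, G·M⟩`; explicitly, for the dual bases `{M_I}` and `{H_I}`,
`M^⊸(H) = Σ_I ⟨H, M_I · M⟩ H_I`. -/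
noncomputable def rperp (M : QSymA A) (H : NSymA A) : NSymA A :=
  ∑ᶠ I ∈ {I : Sentence A | IsSentence I}, pairNQ H (mulQ (MQ I) M) • Hd I

/-- The colored noncommutative Bernstein operator
`𝔹_v = Σ_u Σ_{Q : w(Q^r) = u} (-1)^{ℓ(Q)} H_{v·u} · (Σ_{S ⪰ Q} M_S^⊸)`,
where `Q` runs over all sentences, `u = w(Q^r)` is the concatenation of the words of `Q`
in reverse order, and `S` runs over all coarsenings of `Q`. -/
noncomputable def Bern (v : List A) (f : NSymA A) : NSymA A :=
  ∑ᶠ Q ∈ {Q : Sentence A | IsSentence Q},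
    ((-1 : ℚ)) ^ Q.length •
      mulN (Hw (v ++ Q.reverse.flatten))
        (∑ᶠ S ∈ {S : Sentence A | Refines Q S}, rperp (MQ S) f)

/-- The colored immaculate function `𝔖_J = 𝔹_{v_1} 𝔹_{v_2} ⋯ 𝔹_{v_h}(1)`. -/
noncomputable def ImmS (J : Sentence A) : NSymA A := J.foldr Bern (Hd [])

/-- The colored ribbon function `R_I = Σ_{J ⪰ I} (-1)^{ℓ(J) - ℓ(I)} H_J`. -/
noncomputable def Rib (I : Sentence A) : NSymA A :=
  ∑ᶠ J ∈ {J : Sentence A | Refines I J}, ((-1 : ℚ)) ^ (I.length - J.length) • Hd J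

/-- The Pieri relation `J ⊂_w K` for a sentence `J = (v_1, …, v_h)` and a word `w`:
`K = (u_1, …, u_g)` with `h ≤ g ≤ h+1` (setting `v_{h+1} = ∅`) and `u_j = v_j · q_j`
for words `q_j` (possibly empty) whose reversed concatenation `q_g ⋯ q_1` equals `w`. -/
def PieriRel (J : Sentence A) (w : List A) (K : Sentence A) : Prop :=
  J.length ≤ K.length ∧ K.length ≤ J.length + 1 ∧
  ∃ q : List (List A), q.length = K.length ∧ q.reverse.flatten = w ∧
    ∀ j < K.length, K.getD j [] = J.getD j [] ++ q.getD j []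

/-- Right containment of a weak sentence `K` in `J`: same length, and each word of `K` is a
suffix of the corresponding word of `J`. -/
def RightContained (K J : Sentence A) : Prop :=
  K.length = J.length ∧ ∀ i < J.length, (K.getD i []).IsSuffix (J.getD i [])

/-- The weak sentence `J/_R K`: remove each word of `K` from the right end of the
corresponding word of `J`. -/
def rightQuot (J K : Sentence A) : Sentence A :=
  List.zipWith (fun v u => v.take (v.length - u.length)) J K

/-- Left containment `J ⊆_L I`: `ℓ(J) ≤ ℓ(I)` and each word of `J` is a prefix of the
corresponding word of `I`. -/
def LeftContained (J I : Sentence A) : Prop :=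
  J.length ≤ I.length ∧ ∀ i < J.length, (J.getD i []).IsPrefix (I.getD i [])

/-- A skew colored immaculate tableau of shape `I/J`: a filling of the active boxes
(the `i`-th row keeps the last `|w_i| - |v_i|` boxes) with positive integers, rows weakly
increasing left to right, and the entries in the (active part of the) first column of `I`
strictly increasing top to bottom. -/
def IsSkewCIT (I J : Sentence A) (f : Filling) : Prop :=
  f.map List.length =
    (List.range I.length).map (fun i => (I.getD i []).length - (J.getD i []).length) ∧
  (∀ row ∈ f, row.Chain' (· ≤ ·)) ∧
  ((List.range I.length).filterMap
    (fun i => if (J.getD i []).length = 0 then (f.getD i []).head? else none)).Chain' (· < ·) ∧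
  (∀ x ∈ f.flatten, 1 ≤ x)

/-- The word of the type of a skew tableau at value `v`: the colors of the active boxes with
entry `v`, read left to right, bottom to top. -/
def skewTypeWord (I J : Sentence A) (f : Filling) (v : ℕ) : List A :=
  (((List.range I.length).reverse).map (fun i =>
    rowWith ((I.getD i []).drop (J.getD i []).length) (f.getD i []) v)).flatten

/-- `SkewHasType I J f K` : the skew tableau `f` of shape `I/J` has type `K`. -/
def SkewHasType (I J : Sentence A) (f : Filling) (K : Sentence A) : Prop :=
  ∀ v, 1 ≤ v → skewTypeWord I J f v = K.getD (v - 1) []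

/-! ### The complement involution `ψ` and the row-strict functions -/

/-- The complement `I^c` of a sentence: the unique sentence with the same maximal word
that splits exactly where `I` does not. -/
def complSent (I : Sentence A) : Sentence A :=
  let w := I.flatten
  let n := w.length
  if n = 0 then []
  else
    let splits := (((wl I).scanl (· + ·) 0).drop 1).dropLast
    let csplits := (List.range' 1 (n - 1)).filter (fun i => !(splits.contains i))
    splitByComp w (compOf csplits n)

/-- The `M_I`-coefficient of a colored quasisymmetric function. -/
noncomputable def coeffM (G : QSymA A) (I : Sentence A) : ℚ := G (I, List.range' 1 I.length)

/-- The image of `M_I` under `ψ`, via `M_I = Σ_{J ⪯ I} (-1)^{ℓ(J)-ℓ(I)} F_J` and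
`ψ(F_J) = F_{J^c}`. -/
noncomputable def psiM (I : Sentence A) : QSymA A :=
  ∑ᶠ J ∈ {J : Sentence A | Refines J I}, ((-1 : ℚ)) ^ (J.length - I.length) • FQ (complSent J)

/-- The linear involution `ψ` of `QSym_A`, determined by `ψ(F_I) = F_{I^c}`. -/
noncomputable def psiQ (G : QSymA A) : QSymA A :=
  ∑ᶠ I ∈ {I : Sentence A | IsSentence I}, coeffM G I • psiM I

/-- A colored row-strict immaculate tableau of shape `I`: entries strictly increase left to
right along each row and weakly increase top to bottom down the first column. -/
def IsCRSIT (I : Sentence A) (f : Filling) : Prop :=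
  f.map List.length = I.map List.length ∧
  (∀ row ∈ f, row.Chain' (· < ·)) ∧
  (f.filterMap List.head?).Chain' (· ≤ ·) ∧
  (∀ x ∈ f.flatten, 1 ≤ x)

/-- The word of the type of a row-strict tableau at value `v`: the colors of the boxes with
entry `v`, read left to right, top to bottom. -/
def rsTypeWord (I : Sentence A) (f : Filling) (v : ℕ) : List A :=
  ((I.zip f).map (fun p => rowWith p.1 p.2 v)).flatten

/-- The monomial `x_T` of a colored row-strict immaculate tableau. -/
def rsMonoOf (I : Sentence A) (f : Filling) : Mono A :=
  let vs := ((List.range (maxEntry f)).map (· + 1)).filter (fun v => !(rsTypeWord I f v).isEmpty)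
  (vs.map (rsTypeWord I f), vs)

/-- The colored row-strict dual immaculate function `ℛ𝔖*_J = Σ_T x_T`, summed over all
colored row-strict immaculate tableaux `T` of shape `J`. -/
noncomputable def rsDualImm (J : Sentence A) : QSymA A := fun m =>
  (Set.ncard {f : Filling | IsCRSIT J f ∧ rsMonoOf J f = m} : ℚ)

/-- `α ⪰ β` in the reverse lexicographic order on compositions: at the first index where
they differ, `α` has the *smaller* entry (padding with zeros). -/
def RevLexGE (α β : List ℕ) : Prop :=
  α = β ∨ ∃ i, (∀ j < i, α.getD j 0 = β.getD j 0) ∧ α.getD i 0 < β.getD i 0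

/-! ### Uncolored (ordinary) versions, for `QSym` -/

namespace Uncolored

/-- A composition: a list of positive integers. -/
def IsComposition (α : List ℕ) : Prop := ∀ a ∈ α, 1 ≤ a

/-- `β ⪯ α`: the composition `α` is obtained by summing adjacent parts of `β`. -/
def RefinesC (β α : List ℕ) : Prop :=
  ∃ P : List (List ℕ), (∀ p ∈ P, p ≠ []) ∧ P.flatten = β ∧ P.map List.sum = α

/-- A monomial `x_{i_1}^{a_1} ⋯ x_{i_m}^{a_m}` recorded by its exponents and its
strictly increasing positive indices. -/
abbrev MonoU := List ℕ × List ℕ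

/-- A quasisymmetric "series", recorded by its coefficient function on monomials.
`QSym` is the span of the monomial functions `MU α` inside this space. -/
abbrev QSymU := MonoU → ℚ

/-- Validity of a monomial: matching lengths, strictly increasing positive indices,
positive exponents. -/
def ValidMonoU (m : MonoU) : Prop :=
  m.1.length = m.2.length ∧ m.2.Chain' (· < ·) ∧ (∀ j ∈ m.2, 1 ≤ j) ∧ ∀ a ∈ m.1, 1 ≤ a

open Classical in
/-- The monomial quasisymmetric function `M_α`. -/
noncomputable def MU (α : List ℕ) : QSymU := fun m =>
  if m.1 = α ∧ ValidMonoU m then 1 else 0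

/-- The fundamental quasisymmetric function `F_α = Σ_{β ⪯ α} M_β`. -/
noncomputable def FU (α : List ℕ) : QSymU :=
  ∑ᶠ β ∈ {β : List ℕ | RefinesC β α}, MU β

/-- An immaculate tableau of shape `α`: positive integer entries, rows weakly increasing
left to right, first column strictly increasing top to bottom. -/
def IsIT (α : List ℕ) (f : Filling) : Prop :=
  f.map List.length = α ∧
  (∀ row ∈ f, row.Chain' (· ≤ ·)) ∧
  (f.filterMap List.head?).Chain' (· < ·) ∧
  (∀ x ∈ f.flatten, 1 ≤ x)

/-- The number of boxes of `f` with entry `v`. -/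
def countOf (f : Filling) (v : ℕ) : ℕ := (f.flatten.filter (fun x => x == v)).length

/-- The monomial `x^T` of an immaculate tableau `T` of type `β`:
`x_1^{β_1} ⋯ x_h^{β_h}` (zero exponents skipped). -/
def monoOfU (f : Filling) : MonoU :=
  let vs := ((List.range (maxEntry f)).map (· + 1)).filter (fun v => decide (countOf f v ≠ 0))
  (vs.map (countOf f), vs)

/-- The dual immaculate function `𝔖*_α = Σ_T x^T`, summed over all immaculate tableaux
of shape `α`. -/
noncomputable def dualImmU (α : List ℕ) : QSymU := fun m =>
  (Set.ncard {f : Filling | IsIT α f ∧ monoOfU f = m} : ℚ)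

/-- The descent composition `co(U)` of a standard immaculate tableau. -/
def descComp (f : Filling) : List ℕ :=
  if nBoxes f = 0 then [] else compOf (descList f) (nBoxes f)

/-- `L_{α,β}`: the number of standard immaculate tableaux of shape `α` with descent
composition `β`. -/
noncomputable def LU (α β : List ℕ) : ℕ :=
  Set.ncard {f : Filling | IsIT α f ∧ IsStandardF f ∧ descComp f = β}

/-- Edges of the immaculate descent graph `𝔇^n`. -/
def IsEdgeU (α β : List ℕ) : Prop := β ≠ α ∧ LU α β ≠ 0

/-- Directed paths from `α` to `β` in the immaculate descent graph, recorded by their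
lists of successive vertices; `[α]` is the empty path at `α`. -/
def PathsU (α β : List ℕ) : Set (List (List ℕ)) :=
  {p | p.head? = some α ∧ p.getLast? = some β ∧ p.Chain' IsEdgeU}

/-- The signed weight `(-1)^{ℓ(𝒫)} prod(𝒫)` of a path. -/
noncomputable def pathWeightU (p : List (List ℕ)) : ℚ :=
  ((-1 : ℚ)) ^ (p.length - 1) * ((p.zip p.tail).map (fun e => (LU e.1 e.2 : ℚ))).prod

/-- `L⁻¹_{α,β} = Σ_𝒫 (-1)^{ℓ(𝒫)} prod(𝒫)`, over directed paths from `α` to `β` in `𝔇^n`. -/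
noncomputable def LinvU (α β : List ℕ) : ℚ :=
  ∑ᶠ p ∈ PathsU α β, pathWeightU p

end Uncolored

end ColoredImm

namespace ColoredImm

section Helpers

variable {A : Type*}

theorem rq_splits_spec (J : Sentence A) : ∀ p ∈ splitsOf J,
    p.1 = rightQuot J p.2 ∧ p.1.length = J.length := by
  induction J with
  | nil => intro p hp; simp [splitsOf] at hp; subst hp; simp [rightQuot]
  | cons w ws ih =>
    intro p hp
    simp only [splitsOf, List.mem_flatten, List.mem_map] at hp
    obtain ⟨l, ⟨q, hq, rfl⟩, hp⟩ := hp
    simp only [List.mem_map, List.mem_range] at hp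
    obtain ⟨t, ht, rfl⟩ := hp
    obtain ⟨h1, h2⟩ := ih q hq
    refine ⟨?_, by simp [h2]⟩
    have : w.length - (w.length - t) = t := by omega
    simp only [rightQuot, List.zipWith_cons_cons, List.length_drop, this]
    rw [h1]; rfl

theorem rc_nil (K : Sentence A) : RightContained K [] ↔ K = [] := by
  simp [RightContained]

theorem rc_cons (u w : List A) (K ws : Sentence A) :
    RightContained (u :: K) (w :: ws) ↔ u <:+ w ∧ RightContained K ws := by
  constructor
  · rintro ⟨h1, h2⟩
    refine ⟨by simpa using h2 0 (by simp), by simpa using h1, fun i hi => ?_⟩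
    simpa using h2 (i + 1) (by simpa using hi)
  · rintro ⟨h0, h1, h2⟩
    refine ⟨by simpa using h1, fun i hi => ?_⟩
    cases i with
    | zero => simpa using h0
    | succ i => simpa using h2 i (by simpa using hi)

theorem splits_mem (J : Sentence A) : ∀ K, K ∈ (splitsOf J).map Prod.snd ↔ RightContained K J := by
  induction J with
  | nil => intro K; simp [splitsOf, rc_nil]
  | cons w ws ih =>
    intro K
    cases K with
    | nil => 
      simp [splitsOf, RightContained]
    | cons u K =>
      rw [rc_cons, ← ih K]
      simp only [splitsOf, List.mem_flatten, List.mem_map]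
      constructor
      · rintro ⟨p, ⟨l, ⟨q, hq, rfl⟩, hp⟩, h⟩
        simp only [List.mem_map, List.mem_range] at hp
        obtain ⟨t, ht, rfl⟩ := hp
        simp only [List.cons.injEq] at h
        exact ⟨h.1 ▸ List.drop_suffix _ _, q, hq, h.2⟩
      · rintro ⟨hs, q, hq, rfl⟩
        refine ⟨_, ⟨_, ⟨q, hq, rfl⟩, List.mem_map.2 ⟨w.length - u.length, ?_, rfl⟩⟩, ?_⟩
        · simp
        · simp only [List.cons.injEq, and_true]
          exact (List.suffix_iff_eq_drop.1 hs).symm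

theorem splits_nodup (J : Sentence A) : ((splitsOf J).map Prod.snd).Nodup := by
  induction J with
  | nil => simp [splitsOf]
  | cons w ws ih =>
    have e : (splitsOf (w :: ws)).map Prod.snd =
        (((splitsOf ws).map Prod.snd).map (fun K =>
          (List.range (w.length + 1)).map (fun t => w.drop t :: K))).flatten := by
      simp only [splitsOf, List.map_flatten, List.map_map]
      congr 1
      apply List.map_congr_left
      intro q _
      simp [Function.comp_def]
    rw [e, List.nodup_flatten]
    constructor
    · intro l hl
      obtain ⟨K, _, rfl⟩ := List.mem_map.1 hl
      refine List.Nodup.map_on ?_ List.nodup_range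
      intro a ha b hb h
      simp only [List.cons.injEq, and_true, List.mem_range] at h ha hb
      have := congrArg List.length h
      simp at this
      omega
    · rw [List.pairwise_map]
      refine List.Pairwise.imp ?_ ih
      intro K K' hne x hx hx'
      obtain ⟨a, _, rfl⟩ := List.mem_map.1 hx
      obtain ⟨b, _, hb⟩ := List.mem_map.1 hx'
      simp only [List.cons.injEq] at hb
      exact hne hb.2.symm

theorem restrict_fst (ws : List (List A)) : ∀ js : List ℕ, ws.length = js.length →
    (restrictMono ws js).1 = flattenWS ws := by
  induction ws with
  | nil => intro js _; simp [restrictMono, flattenWS]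
  | cons w ws ih =>
    intro js h
    cases js with
    | nil => simp at h
    | cons j js =>
      have := ih js (by simpa using h)
      simp only [restrictMono, flattenWS] at this
      cases w <;> simp [restrictMono, flattenWS, this]

theorem restrict_valid (ws : List (List A)) (n : ℕ) (h : ws.length = n) :
    ValidMono (restrictMono ws (List.range' 1 n)) := by
  have hsub : (restrictMono ws (List.range' 1 n)).2.Sublist (List.range' 1 n) := by
    have : ((ws.zip (List.range' 1 n)).map Prod.snd) = List.range' 1 n :=
      List.map_snd_zip (by simp [h])
    conv_rhs => rw [← this]
    exact List.Sublist.map _ List.filter_sublist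
  refine ⟨by simp [restrictMono], ?_, ?_, ?_⟩
  · exact (List.Pairwise.sublist hsub (List.pairwise_lt_range' (s := 1))).isChain
  · intro j hj
    have := hsub.subset hj
    simp at this
    omega
  · intro w hw
    simp only [restrictMono, List.mem_map, List.mem_filter] at hw
    obtain ⟨p, ⟨_, hp⟩, rfl⟩ := hw
    intro h0
    simp [h0] at hp

open Classical in
theorem coeff_eq (I J L : Sentence A) (hJ : IsSentence J) :
    pairNQ (Hd J) (mulQ (MQ L) (MQ I)) =
      ∑ K ∈ ((splitsOf J).map Prod.snd).toFinset,
        if flattenWS (rightQuot J K) = L ∧ flattenWS K = I then (1 : ℚ) else 0 := by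
  have h1 : pairNQ (Hd J) (mulQ (MQ L) (MQ I)) =
      mulQ (MQ L) (MQ I) (J, List.range' 1 J.length) := by
    unfold pairNQ
    rw [finsum_eq_single _ J]
    · have hJ' : J ∈ {I : Sentence A | IsSentence I} := hJ
      rw [finsum_eq_if, if_pos hJ']
      simp [Hd]
    · intro x hx
      simp [Hd, hx]
  rw [h1, List.sum_toFinset _ (splits_nodup J), List.map_map]
  unfold mulQ
  congr 1
  apply List.map_congr_left
  intro p hp
  obtain ⟨e, hl⟩ := rq_splits_spec J p hp
  have hl2 : p.2.length = J.length :=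
    ((splits_mem J p.2).1 (List.mem_map.2 ⟨p, hp, rfl⟩)).1
  simp only [MQ, restrict_valid _ _ hl, restrict_valid _ _ hl2, and_true, Function.comp, ← e]
  rw [restrict_fst _ _ (by simp [hl]), restrict_fst _ _ (by simp [hl2])]
  split_ifs <;> simp_all

theorem flattenWS_isSentence (K : Sentence A) : IsSentence (flattenWS K) := by
  intro w hw h0
  simp [flattenWS, h0] at hw

end Helpers

/-- For sentences `I` and `J`, the right perp operator acts on the
complete homogeneous basis by `M_I^⊸(H_J) = Σ_K H_{(J/_R K)~}`, the sum running over all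
weak sentences `K` with flattening `I` that are right-contained in `J`. -/
theorem statement9 {A : Type*} (I J : Sentence A) (hI : IsSentence I) (hJ : IsSentence J) :
    rperp (MQ I) (Hd J) =
      ∑ᶠ K ∈ {K : Sentence A | flattenWS K = I ∧ RightContained K J},
        Hd (flattenWS (rightQuot J K)) := by
  classical
  set S := ((splitsOf J).map Prod.snd).toFinset with hS
  have hR : ∑ᶠ K ∈ {K : Sentence A | flattenWS K = I ∧ RightContained K J},
        Hd (flattenWS (rightQuot J K)) =
      ∑ K ∈ S with flattenWS K = I, Hd (flattenWS (rightQuot J K)) := by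
    rw [← finsum_mem_coe_finset]
    congr 1
    ext1 K
    have : K ∈ {K : Sentence A | flattenWS K = I ∧ RightContained K J} ↔
        K ∈ ((S.filter (fun K => flattenWS K = I) : Finset _) : Set (Sentence A)) := by
      rw [Finset.mem_coe, Finset.mem_filter, hS, List.mem_toFinset, splits_mem]
      exact and_comm
    simp only [this]
  rw [hR]
  unfold rperp
  rw [finsum_mem_eq_sum_of_subset (t := S.image (fun K => flattenWS (rightQuot J K)))]
  · simp only [coeff_eq I J _ hJ, ← hS, Finset.sum_smul]
    rw [Finset.sum_comm, Finset.sum_filter]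
    apply Finset.sum_congr rfl
    intro K hK
    rw [Finset.sum_eq_single (flattenWS (rightQuot J K))]
    · by_cases h : flattenWS K = I <;> simp [h]
    · intro L _ hL
      simp [hL.symm]
    · intro h
      exact absurd (Finset.mem_image_of_mem _ hK) h
  · rintro L ⟨_, hL⟩
    by_contra hn
    apply hL
    simp only
    rw [coeff_eq I J _ hJ, Finset.sum_eq_zero, zero_smul]
    intro K hK
    rw [if_neg]
    rintro ⟨h, _⟩
    exact hn (Finset.mem_coe.2 (Finset.mem_image.2 ⟨K, hK, h⟩))
  · intro L hL
    obtain ⟨K, _, rfl⟩ := Finset.mem_image.1 (Finset.mem_coe.1 hL)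
    exact flattenWS_isSentence _

end ColoredImm
end

section
/- (Right Pieri rule for colored immaculate functions) For a sentence J=(v_1,…,v_h) and a word w, 𝔖_J·H_w = Σ_{J ⊂_w K} 𝔖_K, where the sum runs over all sentences K=(u_1,…,u_g) such that J ⊂_w K, i.e., g ≤ h+1 (setting v_{h+1}=∅) and u_j = v_j·q_j for 1 ≤ j ≤ g for words q_j (possibly empty) with q_g·q_{g−1}⋯q_2·q_1 = w. -/
open scoped BigOperators

namespace ColoredImm
namespace Pieri
open Classical

variable {A : Type*}

/-! generic sums -/

theorem finsum_list {ι κ M : Type*} [AddCommMonoid M] (s : Set ι) (L : List κ) (g : ι → κ → M)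
    (h : ∀ x ∈ L, (s ∩ Function.support (fun i => g i x)).Finite) :
    ∑ᶠ i ∈ s, (L.map (g i)).sum = (L.map (fun x => ∑ᶠ i ∈ s, g i x)).sum ∧
    (s ∩ Function.support (fun i => (L.map (g i)).sum)).Finite := by
  induction L with
  | nil => simp
  | cons x L ih =>
    have ih' := ih (fun y hy => h y (List.mem_cons_of_mem _ hy))
    have hx := h x List.mem_cons_self
    constructor
    · simp only [List.map_cons, List.sum_cons]
      rw [finsum_mem_add_distrib' hx ih'.2, ih'.1]
    · refine (hx.union ih'.2).subset ?_
      rintro i ⟨hi, hi2⟩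
      by_contra hc
      simp only [Set.mem_union, Set.mem_inter_iff, hi, true_and, Function.mem_support,
        not_or, not_not] at hc
      apply hi2
      simp [hc.1, hc.2]

theorem finsum_single {ι M : Type*} [DecidableEq ι] [AddCommMonoid M] (s : Set ι) (a : ι) (g : ι → M) :
    ∑ᶠ i ∈ s, (if a = i then g i else 0) = if a ∈ s then g a else 0 := by
  rw [finsum_eq_single _ a]
  · by_cases h : a ∈ s <;> simp [h]
  · intro x hx
    simp [Ne.symm hx]

theorem finite_single {ι M : Type*} [DecidableEq ι] [AddCommMonoid M] (s : Set ι) (a : ι) (g : ι → M) :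
    (s ∩ Function.support (fun i => if a = i then g i else 0)).Finite := by
  refine (Set.finite_singleton a).subset ?_
  rintro i ⟨_, hi⟩
  by_contra hc
  apply hi
  simp only [Set.mem_singleton_iff] at hc
  simp [Ne.symm hc]

theorem finsum_list_single {ι κ M : Type*} [DecidableEq ι] [AddCommMonoid M] (s : Set ι)
    (L : List κ) (a : κ → ι) (g : κ → ι → M) :
    ∑ᶠ i ∈ s, (L.map (fun x => if a x = i then g x i else 0)).sum =
      (L.map (fun x => if a x ∈ s then g x (a x) else 0)).sum := by
  rw [(finsum_list s L (fun i x => if a x = i then g x i else 0)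
    (fun x _ => finite_single s (a x) (g x))).1]
  simp only [finsum_single]

theorem finsum_mem_list {ι M : Type*} [AddCommMonoid M] (s : Set ι) (L : List ι) (hL : L.Nodup)
    (h : ∀ i, i ∈ s ↔ i ∈ L) (g : ι → M) : ∑ᶠ i ∈ s, g i = (L.map g).sum := by
  have : s = ↑L.toFinset := by ext i; simp [h]
  rw [this, finsum_mem_coe_finset, List.sum_toFinset _ hL]

theorem sum_flatMap {ι κ M : Type*} [AddCommMonoid M] (L : List ι) (g : ι → List κ) (f : κ → M) :
    ((L.flatMap g).map f).sum = (L.map (fun i => ((g i).map f).sum)).sum := by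
  induction L with
  | nil => simp
  | cons x L ih => simp [List.flatMap_cons, ih]

theorem sum_comm {ι κ M : Type*} [AddCommMonoid M] (L : List ι) (L' : List κ) (f : ι → κ → M) :
    (L.map (fun i => (L'.map (f i)).sum)).sum =
      (L'.map (fun k => (L.map (fun i => f i k)).sum)).sum := by
  induction L with
  | nil => simp
  | cons x L ih => simp [ih, List.sum_map_add]

theorem smul_sum {ι M : Type*} [AddCommGroup M] [Module ℚ M] (L : List ι) (c : ℚ) (f : ι → M) :
    c • (L.map f).sum = (L.map (fun i => c • f i)).sum := by
  induction L with
  | nil => simp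
  | cons x L ih => simp [ih]

/-! mulN -/

theorem mulN_add_left (f g h : NSymA A) : mulN (f + g) h = mulN f h + mulN g h := by
  funext I; simp [mulN, add_mul, Finset.sum_add_distrib]
theorem mulN_add_right (f g h : NSymA A) : mulN f (g + h) = mulN f g + mulN f h := by
  funext I; simp [mulN, mul_add, Finset.sum_add_distrib]
theorem mulN_zero_left (h : NSymA A) : mulN 0 h = 0 := by
  funext I; simp [mulN]
theorem mulN_zero_right (h : NSymA A) : mulN h 0 = 0 := by
  funext I; simp [mulN]
theorem mulN_smul_left (c : ℚ) (f h : NSymA A) : mulN (c • f) h = c • mulN f h := by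
  funext I; simp [mulN, Finset.mul_sum, mul_assoc]
theorem mulN_smul_right (c : ℚ) (f h : NSymA A) : mulN f (c • h) = c • mulN f h := by
  funext I; simp [mulN, Finset.mul_sum, mul_left_comm]
theorem mulN_sum_left {ι : Type*} (L : List ι) (f : ι → NSymA A) (h : NSymA A) :
    mulN ((L.map f).sum) h = (L.map (fun i => mulN (f i) h)).sum := by
  induction L with
  | nil => simp [mulN_zero_left]
  | cons x L ih => simp [mulN_add_left, ih]
theorem mulN_sum_right {ι : Type*} (L : List ι) (f : ι → NSymA A) (h : NSymA A) :
    mulN h ((L.map f).sum) = (L.map (fun i => mulN h (f i))).sum := by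
  induction L with
  | nil => simp [mulN_zero_right]
  | cons x L ih => simp [mulN_add_right, ih]

theorem mulN_Hd (I J : Sentence A) : mulN (Hd I) (Hd J) = Hd (I ++ J) := by
  funext K
  simp only [mulN, Hd]
  by_cases h : K = I ++ J
  · subst h
    rw [Finset.sum_eq_single I.length]
    · simp
    · intro j hj hne
      rw [if_neg, zero_mul]
      intro h
      have := congrArg List.length h
      simp at this hj
      omega
    · simp
  · rw [if_neg h]
    apply Finset.sum_eq_zero
    intro j _
    by_cases h1 : K.take j = I
    · by_cases h2 : K.drop j = J
      · exfalso; apply h; rw [← h1, ← h2, List.take_append_drop]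
      · simp [h2]
    · simp [h1]

theorem Hw_eq (w : List A) : Hw w = Hd (flattenWS [w]) := by
  cases w <;> simp [Hw, flattenWS]

theorem flattenWS_append (I J : Sentence A) : flattenWS (I ++ J) = flattenWS I ++ flattenWS J := by
  simp [flattenWS]

theorem flattenWS_sentence (I : Sentence A) : IsSentence (flattenWS I) := by
  intro w hw
  simp [flattenWS] at hw
  exact hw.2

theorem flattenWS_of (I : Sentence A) (h : IsSentence I) : flattenWS I = I := by
  rw [flattenWS, List.filter_eq_self]
  intro w hw
  simpa using h w hw

theorem mulN_Hd_nil (f : NSymA A) : mulN f (Hd []) = f := by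
  funext K
  simp only [mulN, Hd]
  rw [Finset.sum_eq_single K.length]
  · simp
  · intro j hj hne
    rw [if_neg, mul_zero]
    simp at hj ⊢
    omega
  · simp

/-! splits -/

theorem splitsOf_length (I : Sentence A) : ∀ p ∈ splitsOf I, p.1.length = I.length ∧ p.2.length = I.length := by
  induction I with
  | nil => simp [splitsOf]
  | cons w ws ih =>
    intro p hp
    simp only [splitsOf, List.mem_flatten, List.mem_map] at hp
    obtain ⟨l, ⟨q, hq, rfl⟩, hp⟩ := hp
    simp only [List.mem_map] at hp
    obtain ⟨t, _, rfl⟩ := hp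
    simpa using ih q hq

theorem splits_cons {M : Type*} [AddCommMonoid M] (w : List A) (ws : Sentence A)
    (G : Sentence A × Sentence A → M) :
    ((splitsOf (w :: ws)).map G).sum = ((splitsOf ws).map (fun p =>
      ((List.range (w.length + 1)).map (fun t => G (w.take t :: p.1, w.drop t :: p.2))).sum)).sum := by
  rw [splitsOf, ← List.flatMap_def, sum_flatMap]
  simp [Function.comp_def]

theorem splits_snoc {M : Type*} [AddCommMonoid M] (I : Sentence A) (w : List A) :
    ∀ (G : Sentence A × Sentence A → M),
    ((splitsOf (I ++ [w])).map G).sum = ((List.range (w.length + 1)).map (fun t =>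
      ((splitsOf I).map (fun p => G (p.1 ++ [w.take t], p.2 ++ [w.drop t]))).sum)).sum := by
  induction I with
  | nil => intro G; simp [splitsOf]; simp [Function.comp_def]
  | cons v I ih =>
    intro G
    simp only [List.cons_append, splits_cons]
    rw [ih]

/-! restrictMono -/

theorem restrict_fst (ws : Sentence A) : ∀ (js : List ℕ), ws.length = js.length →
    (restrictMono ws js).1 = flattenWS ws := by
  induction ws with
  | nil => intro js; simp [restrictMono, flattenWS]
  | cons w ws ih =>
    intro js h
    cases js with
    | nil => simp at h
    | cons j js =>
      have := ih js (by simpa using h)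
      simp only [restrictMono, flattenWS] at this ⊢
      cases w <;> simp_all

theorem restrict_valid (ws : Sentence A) (js : List ℕ) (h : ws.length = js.length)
    (hj : js.Pairwise (· < ·)) (hp : ∀ j ∈ js, 1 ≤ j) : ValidMono (restrictMono ws js) := by
  refine ⟨by simp [restrictMono], ?_, ?_, ?_⟩
  · apply List.Pairwise.isChain
    refine List.Pairwise.sublist ?_ hj
    have h1 : ((ws.zip js).map Prod.snd) = js := by
      rw [List.map_snd_zip]; omega
    conv_rhs => rw [← h1]
    exact List.Sublist.map _ List.filter_sublist
  · intro j hj'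
    simp only [restrictMono, List.mem_map, List.mem_filter] at hj'
    obtain ⟨p, ⟨hp1, _⟩, rfl⟩ := hj'
    exact hp _ (List.of_mem_zip hp1).2
  · rw [restrict_fst _ _ h]; exact flattenWS_sentence ws

theorem mulQ_MQ (K S I : Sentence A) :
    mulQ (MQ K) (MQ S) (I, List.range' 1 I.length) =
      ((splitsOf I).map (fun p => (if flattenWS p.1 = K then (1:ℚ) else 0) *
        (if flattenWS p.2 = S then 1 else 0))).sum := by
  unfold mulQ
  congr 1
  apply List.map_congr_left
  intro p hp
  obtain ⟨h1, h2⟩ := splitsOf_length I p hp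
  have key : ∀ (K ws : Sentence A), ws.length = I.length →
      MQ K (restrictMono ws (List.range' 1 I.length)) = if flattenWS ws = K then (1:ℚ) else 0 := by
    intro K ws h
    have h' : ws.length = (List.range' 1 I.length).length := by simpa using h
    unfold MQ
    rw [restrict_fst _ _ h']
    have hv := restrict_valid ws _ h' (List.pairwise_lt_range') (by simp; omega)
    simp [hv]
  simp only [key K p.1 h1, key S p.2 h2]

/-- finite combos -/
noncomputable def combo (L : List (ℚ × Sentence A)) : NSymA A :=
  (L.map (fun x => x.1 • Hd x.2)).sum

theorem combo_append (L L' : List (ℚ × Sentence A)) : combo (L ++ L') = combo L + combo L' := by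
  simp [combo]

theorem pair_combo (L : List (ℚ × Sentence A)) (hL : ∀ x ∈ L, IsSentence x.2) (F : QSymA A) :
    pairNQ (combo L) F = (L.map (fun x => x.1 * F (x.2, List.range' 1 x.2.length))).sum := by
  have h1 : ∀ I : Sentence A, combo L I * F (I, List.range' 1 I.length) =
      (L.map (fun x => if x.2 = I then x.1 * F (I, List.range' 1 I.length) else 0)).sum := by
    intro I
    clear hL
    induction L with
    | nil => simp [combo]
    | cons x L ih =>
      have : combo (x :: L) I = x.1 * Hd x.2 I + combo L I := by simp [combo]
      rw [this, add_mul, ih]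
      simp only [List.map_cons, List.sum_cons, Hd]
      congr 1
      by_cases h : I = x.2
      · simp [h]
      · simp [h, Ne.symm h]
  unfold pairNQ
  simp only [h1]
  rw [finsum_list_single _ L (fun x => x.2) (fun x I => x.1 * F (I, List.range' 1 I.length))]
  congr 1
  apply List.map_congr_left
  intro x hx
  simp [hL x hx]

/-- All triples arising from splitting. -/
def trip (L : List (ℚ × Sentence A)) : List (ℚ × Sentence A × Sentence A) :=
  L.flatMap (fun x => (splitsOf x.2).map (fun p => (x.1, flattenWS p.1, flattenWS p.2)))

theorem trip_sentence (L : List (ℚ × Sentence A)) : ∀ y ∈ trip L, IsSentence y.2.1 ∧ IsSentence y.2.2 := by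
  intro y hy
  simp only [trip, List.mem_flatMap, List.mem_map] at hy
  obtain ⟨x, _, p, _, rfl⟩ := hy
  exact ⟨flattenWS_sentence _, flattenWS_sentence _⟩

theorem rperp_combo (L : List (ℚ × Sentence A)) (hL : ∀ x ∈ L, IsSentence x.2) (S : Sentence A) :
    rperp (MQ S) (combo L) =
      ((trip L).map (fun y => if y.2.2 = S then y.1 • Hd y.2.1 else 0)).sum := by
  have h1 : ∀ K : Sentence A, pairNQ (combo L) (mulQ (MQ K) (MQ S)) • (Hd K : NSymA A) =
      ((trip L).map (fun y => if y.2.1 = K then (if y.2.2 = S then y.1 • Hd K else 0) else 0)).sum := by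
    intro K
    rw [pair_combo L hL, trip, sum_flatMap]
    clear hL
    induction L with
    | nil => simp
    | cons x L ih =>
      simp only [List.map_cons, List.sum_cons, add_smul, ih]
      congr 1
      rw [mulQ_MQ]
      generalize splitsOf x.2 = P
      induction P with
      | nil => simp
      | cons p P ih =>
        simp only [List.map_cons, List.sum_cons, mul_add, add_smul, ih]
        congr 1
        by_cases h1 : flattenWS p.1 = K <;> by_cases h2 : flattenWS p.2 = S <;> simp [h1, h2]
  unfold rperp
  simp only [h1]
  rw [finsum_list_single _ (trip L) (fun y => y.2.1)
    (fun y K => if y.2.2 = S then y.1 • Hd K else 0)]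
  congr 1
  apply List.map_congr_left
  intro y hy
  simp [(trip_sentence L y hy).1]

/-! refinements -/

/-- All sentences with concatenation `w`. -/
def refsWord (w : List A) : List (Sentence A) :=
  if w = [] then [[]] else
  (List.range w.length).attach.flatMap (fun t =>
    (refsWord (w.take t.1)).map (fun Q => Q ++ [w.drop t.1]))
termination_by w.length
decreasing_by
  have := List.mem_range.1 t.2
  simp
  omega

theorem refsWord_nil : refsWord ([] : List A) = [[]] := by
  rw [refsWord]; simp

theorem refsWord_eq (w : List A) (h : w ≠ []) : refsWord w =
    (List.range w.length).flatMap (fun t =>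
      (refsWord (w.take t)).map (fun Q => Q ++ [w.drop t])) := by
  rw [refsWord, if_neg h]
  conv_rhs => rw [← List.attach_map_subtype_val (List.range w.length)]
  rw [List.flatMap_map]

theorem mem_refsWord : ∀ (n : ℕ) (w : List A), w.length = n → ∀ Q : Sentence A,
    Q ∈ refsWord w ↔ IsSentence Q ∧ Q.flatten = w := by
  intro n
  induction n using Nat.strong_induction_on with
  | _ n ih =>
    intro w hw Q
    by_cases h : w = []
    · subst h
      rw [refsWord_nil]
      simp only [List.mem_singleton, List.flatten_eq_nil_iff]
      constructor
      · rintro rfl; simp [IsSentence]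
      · rintro ⟨h1, h2⟩
        cases Q with
        | nil => rfl
        | cons q Q => exact absurd (h2 q (by simp)) (h1 q (by simp))
    · rw [refsWord_eq w h]
      simp only [List.mem_flatMap, List.mem_range, List.mem_map]
      constructor
      · rintro ⟨t, ht, Q', hQ', rfl⟩
        rw [ih t (by omega) (w.take t) (by simp; omega)] at hQ'
        refine ⟨?_, by simp [hQ'.2]⟩
        intro x hx
        rw [List.mem_append, List.mem_singleton] at hx
        rcases hx with hx | rfl
        · exact hQ'.1 x hx
        · simp; omega
      · rintro ⟨h1, h2⟩
        rcases List.eq_nil_or_concat Q with rfl | ⟨Q', b, rfl⟩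
        · simp at h2; exact absurd h2 h
        · have hb : b ≠ [] := h1 b (by simp)
          have hb' : 0 < b.length := List.length_pos_of_ne_nil hb
          have h2' : Q'.flatten ++ b = w := by simpa using h2
          have hl := congrArg List.length h2'
          rw [List.length_append] at hl
          refine ⟨Q'.flatten.length, by omega, Q', ?_, ?_⟩
          · rw [ih Q'.flatten.length (by omega) _ (by simp [← h2'])]
            refine ⟨fun x hx => h1 x (by simp [hx]), by simp [← h2']⟩
          · simp [← h2']

theorem nodup_refsWord : ∀ (n : ℕ) (w : List A), w.length = n → (refsWord w).Nodup := by
  intro n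
  induction n using Nat.strong_induction_on with
  | _ n ih =>
    intro w hw
    by_cases h : w = []
    · subst h; simp [refsWord_nil]
    · rw [refsWord_eq w h, List.nodup_flatMap]
      constructor
      · intro t ht
        rw [List.mem_range] at ht
        exact (ih t (by omega) _ (by simp; omega)).map (fun _ _ h => List.append_cancel_right h)
      · refine List.Pairwise.imp_of_mem ?_ (List.pairwise_lt_range (n := w.length))
        intro t t' ht ht' hlt Q hQ hQ'
        rw [List.mem_range] at ht ht'
        simp only [List.mem_map] at hQ hQ'
        obtain ⟨Q1, _, rfl⟩ := hQ
        obtain ⟨Q2, _, h2⟩ := hQ'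
        have := (List.append_inj' h2 rfl).2
        have := congrArg List.length (List.singleton_inj.1 this)
        simp at this
        omega

/-- All refinements of a (weak) sentence. -/
def refsS : Sentence A → List (Sentence A)
  | [] => [[]]
  | s :: S => (refsWord s).flatMap (fun Q1 => (refsS S).map (fun Q2 => Q1 ++ Q2))

theorem mem_refsS (S : Sentence A) : ∀ Q : Sentence A, Q ∈ refsS S ↔
    ∃ P : List (Sentence A), (∀ p ∈ P, IsSentence p) ∧ P.flatten = Q ∧ P.map List.flatten = S := by
  induction S with
  | nil =>
    intro Q
    simp only [refsS, List.mem_singleton, List.map_eq_nil_iff]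
    constructor
    · rintro rfl; exact ⟨[], by simp⟩
    · rintro ⟨P, _, h, rfl⟩; simpa using h.symm
  | cons s S ih =>
    intro Q
    simp only [refsS, List.mem_flatMap, List.mem_map, ih, mem_refsWord _ s rfl]
    constructor
    · rintro ⟨Q1, ⟨h1, h2⟩, Q2, ⟨P, hP1, hP2, hP3⟩, rfl⟩
      refine ⟨Q1 :: P, ?_, by simp [hP2], by simp [h2, hP3]⟩
      intro p hp
      rcases List.mem_cons.1 hp with rfl | hp
      · exact h1
      · exact hP1 p hp
    · rintro ⟨P, hP1, hP2, hP3⟩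
      cases P with
      | nil => simp at hP3
      | cons p P =>
        simp only [List.map_cons, List.cons.injEq] at hP3
        refine ⟨p, ⟨hP1 p (by simp), hP3.1⟩, P.flatten,
          ⟨P, fun x hx => hP1 x (by simp [hx]), rfl, hP3.2⟩, by simpa using hP2⟩

theorem prefix_eq (Q1 Q2 R1 R2 : Sentence A) (h1 : IsSentence Q1) (h2 : IsSentence Q2)
    (hf : Q1.flatten = Q2.flatten) (h : Q1 ++ R1 = Q2 ++ R2) : Q1 = Q2 := by
  have nilof : ∀ a : Sentence A, IsSentence a → a.flatten = [] → a = [] := by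
    intro a ha h
    rw [List.flatten_eq_nil_iff] at h
    cases a with
    | nil => rfl
    | cons q Q => exact absurd (h q (by simp)) (ha q (by simp))
  rcases List.append_eq_append_iff.1 h with ⟨a, ha, _⟩ | ⟨a, ha, _⟩
  · have := nilof a (fun x hx => h2 x (by simp [ha, hx])) (by simpa [ha] using hf)
    simp [ha, this]
  · have := nilof a (fun x hx => h1 x (by simp [ha, hx])) (by simpa [ha] using hf)
    simp [ha, this]

theorem nodup_refsS (S : Sentence A) : (refsS S).Nodup := by
  induction S with
  | nil => simp [refsS]
  | cons s S ih =>
    rw [refsS, List.nodup_flatMap]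
    constructor
    · intro Q _
      exact ih.map (fun _ _ h => List.append_cancel_left h)
    · refine List.Pairwise.imp_of_mem ?_ (nodup_refsWord _ s rfl)
      intro Q1 Q2 h1 h2 hne Q hQ hQ'
      rw [mem_refsWord _ s rfl] at h1 h2
      simp only [List.mem_map] at hQ hQ'
      obtain ⟨R1, _, rfl⟩ := hQ
      obtain ⟨R2, _, h⟩ := hQ'
      exact hne (prefix_eq Q1 Q2 R1 R2 h1.1 h2.1 (h1.2.trans h2.2.symm) h.symm)

theorem mem_refsS' (S Q : Sentence A) (hS : IsSentence S) :
    (IsSentence Q ∧ Refines Q S) ↔ Q ∈ refsS S := by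
  rw [mem_refsS]
  constructor
  · rintro ⟨hQ, P, _, h2, h3⟩
    refine ⟨P, ?_, h2, h3⟩
    intro p hp w hw
    exact hQ w (h2 ▸ List.mem_flatten.2 ⟨p, hp, hw⟩)
  · rintro ⟨P, h1, h2, h3⟩
    refine ⟨?_, P, ?_, h2, h3⟩
    · intro w hw
      rw [← h2, List.mem_flatten] at hw
      obtain ⟨p, hp, hw⟩ := hw
      exact h1 p hp w hw
    · rintro p hp rfl
      exact hS [] (h3 ▸ List.mem_map.2 ⟨[], hp, rfl⟩) rfl

theorem refsS_flattenWS (S : Sentence A) : refsS (flattenWS S) = refsS S := by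
  induction S with
  | nil => rfl
  | cons s S ih =>
    cases s with
    | nil =>
      have : flattenWS ([] :: S) = flattenWS S := by simp [flattenWS]
      rw [this, ih, refsS, refsWord_nil]; simp
    | cons a s =>
      have : flattenWS ((a :: s) :: S) = (a :: s) :: flattenWS S := by simp [flattenWS]
      rw [this, refsS, ih, refsS]

theorem refsS_snoc {M : Type*} [AddCommMonoid M] (S : Sentence A) (s : List A) :
    ∀ G : Sentence A → M, ((refsS (S ++ [s])).map G).sum =
      ((refsWord s).map (fun Q2 => ((refsS S).map (fun Q1 => G (Q1 ++ Q2))).sum)).sum := by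
  induction S with
  | nil => intro G; simp [refsS]
  | cons r S ih =>
    intro G
    simp only [List.cons_append, refsS, sum_flatMap, List.map_map, Function.comp_def]
    have : ∀ Q : Sentence A, ((refsS (S ++ [s])).map (fun x => G (Q ++ x))).sum = _ :=
      fun Q => ih (fun x => G (Q ++ x))
    simp only [this]
    rw [sum_comm]
    simp only [List.append_assoc]

/-! Bern on combos -/

/-- The inner term. -/
noncomputable def tm (v : List A) (K Q : Sentence A) : NSymA A :=
  ((-1 : ℚ)) ^ Q.length • mulN (Hw (v ++ Q.reverse.flatten)) (Hd K)

theorem Bern_combo (v : List A) (L : List (ℚ × Sentence A)) (hL : ∀ x ∈ L, IsSentence x.2) :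
    Bern v (combo L) =
      ((trip L).map (fun y => y.1 • ((refsS y.2.2).map (tm v y.2.1)).sum)).sum := by
  have h1 : ∀ Q : Sentence A, ((-1 : ℚ)) ^ Q.length •
      mulN (Hw (v ++ Q.reverse.flatten))
        (∑ᶠ S ∈ {S : Sentence A | Refines Q S}, rperp (MQ S) (combo L)) =
      ((trip L).map (fun y => if Refines Q y.2.2 then y.1 • tm v y.2.1 Q else 0)).sum := by
    intro Q
    simp only [rperp_combo L hL]
    rw [finsum_list_single _ (trip L) (fun y => y.2.2) (fun y _ => y.1 • Hd y.2.1),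
      mulN_sum_right, smul_sum]
    congr 1
    apply List.map_congr_left
    intro y _
    by_cases h : Refines Q y.2.2
    · simp [h, tm, mulN_smul_right, smul_comm y.1]
    · simp [h, mulN_zero_right]
  unfold Bern
  simp only [h1]
  rw [(finsum_list _ (trip L)
    (fun Q y => if Refines Q y.2.2 then y.1 • tm v y.2.1 Q else 0) ?_).1]
  · congr 1
    apply List.map_congr_left
    intro y hy
    rw [smul_sum, ← finsum_mem_list {Q | IsSentence Q ∧ Refines Q y.2.2} _ (nodup_refsS _)
      (fun Q => mem_refsS' _ Q (trip_sentence L y hy).2)]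
    apply finsum_congr
    intro Q
    by_cases h : IsSentence Q <;> by_cases h' : Refines Q y.2.2 <;> simp [h, h']
  · intro y hy
    refine (refsS y.2.2).toFinset.finite_toSet.subset ?_
    rintro Q ⟨h1, h2⟩
    simp only [List.coe_toFinset, Set.mem_ofPred_eq]
    rw [← mem_refsS' _ Q (trip_sentence L y hy).2]
    refine ⟨h1, ?_⟩
    by_contra hc
    exact h2 (by simp [hc])

/-- The Bernstein operator on a basis element. -/
noncomputable def D (v : List A) (I : Sentence A) : NSymA A :=
  ((splitsOf I).map (fun p => ((refsS p.2).map (tm v (flattenWS p.1))).sum)).sum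

theorem Bern_combo' (v : List A) (L : List (ℚ × Sentence A)) (hL : ∀ x ∈ L, IsSentence x.2) :
    Bern v (combo L) = (L.map (fun x => x.1 • D v x.2)).sum := by
  rw [Bern_combo v L hL, trip, sum_flatMap]
  simp only [List.map_map, Function.comp_def, D, smul_sum, refsS_flattenWS]

/-! core -/

/-- The antipode functional. -/
noncomputable def E (w : List A) (F : List A → NSymA A) : NSymA A :=
  ((refsWord w).map (fun Q => ((-1 : ℚ)) ^ Q.length • F Q.reverse.flatten)).sum

theorem lsum_range {M : Type*} [AddCommMonoid M] (n : ℕ) (f : ℕ → M) :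
    ((List.range n).map f).sum = ∑ t ∈ Finset.range n, f t := rfl

theorem E_nil (F : List A → NSymA A) : E [] F = F [] := by
  simp [E, refsWord_nil]

theorem E_rec (w : List A) (hw : w ≠ []) (F : List A → NSymA A) :
    E w F = ∑ t ∈ Finset.range w.length, - E (w.take t) (fun u => F (w.drop t ++ u)) := by
  conv_lhs => rw [E, refsWord_eq w hw, sum_flatMap, lsum_range]
  apply Finset.sum_congr rfl
  intro t _
  rw [← neg_one_smul ℚ (E _ _), E, smul_sum]
  simp [Function.comp_def, pow_succ]

theorem E_cancel (r : List A) (F : List A → NSymA A) :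
    ∑ j ∈ Finset.range (r.length + 1), E (r.take j) (fun u => F (r.drop j ++ u)) =
      if r = [] then F [] else 0 := by
  by_cases h : r = []
  · subst h; simp [E_nil]
  · rw [Finset.sum_range_succ, if_neg h]
    simp only [List.take_length, List.drop_length, List.nil_append]
    rw [E_rec r h, ← Finset.sum_add_distrib]
    simp

theorem tm_snoc (v : List A) (K : Sentence A) (p : List A) (Q1 Q2 : Sentence A) :
    tm v (flattenWS (K ++ [p])) (Q1 ++ Q2) = ((-1 : ℚ)) ^ Q2.length •
      mulN (tm (v ++ Q2.reverse.flatten) (flattenWS K) Q1) (Hw p) := by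
  simp only [tm, flattenWS_append, Hw_eq, mulN_smul_left, mulN_Hd, smul_smul, List.append_assoc,
    List.length_append, List.reverse_append, List.flatten_append, pow_add]
  rw [mul_comm]

theorem D_snoc (v : List A) (I : Sentence A) (w : List A) :
    D v (I ++ [w]) = ∑ t ∈ Finset.range (w.length + 1),
      E (w.drop t) (fun u => mulN (D (v ++ u) I) (Hw (w.take t))) := by
  rw [D, splits_snoc, lsum_range]
  apply Finset.sum_congr rfl
  intro t _
  simp only [refsS_snoc, tm_snoc]
  rw [sum_comm]
  simp only [E, D, mulN_sum_left, smul_sum]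

theorem key (v : List A) (I : Sentence A) (w : List A) :
    mulN (D v I) (Hw w) = ∑ t ∈ Finset.range (w.length + 1), D (v ++ w.drop t) (I ++ [w.take t]) := by
  simp only [D_snoc]
  have h1 : ∀ t' ∈ Finset.range (w.length + 1),
      ∑ j ∈ Finset.range (w.length - t' + 1), E ((w.drop t').take j)
        (fun u => mulN (D (v ++ ((w.drop t').drop j ++ u)) I) (Hw (w.take t'))) =
      if t' = w.length then mulN (D v I) (Hw w) else 0 := by
    intro t' ht'
    have := E_cancel (w.drop t') (fun u => mulN (D (v ++ u) I) (Hw (w.take t')))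
    rw [List.length_drop] at this
    rw [this]
    rw [Finset.mem_range] at ht'
    by_cases h : t' = w.length
    · subst h; simp
    · rw [if_neg h, if_neg]
      simp; omega
  have h2 := Finset.sum_congr rfl h1
  rw [Finset.sum_ite_eq' ] at h2
  rw [if_pos (by simp)] at h2
  rw [← h2, Finset.sum_sigma', Finset.sum_sigma']
  refine Finset.sum_bij' (fun x _ => ⟨x.1 + x.2, x.1⟩) (fun y _ => ⟨y.2, y.1 - y.2⟩) ?_ ?_ ?_ ?_ ?_
  · rintro ⟨a, b⟩ h
    simp only [Finset.mem_sigma, Finset.mem_range, List.length_take] at h ⊢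
    omega
  · rintro ⟨a, b⟩ h
    simp only [Finset.mem_sigma, Finset.mem_range, List.length_take] at h ⊢
    omega
  · rintro ⟨a, b⟩ h
    simp
  · rintro ⟨a, b⟩ h
    simp only [Finset.mem_sigma, Finset.mem_range, List.length_take] at h
    have : b + (a - b) = a := by omega
    simp [this]
  · rintro ⟨a, b⟩ h
    simp only [List.drop_take, List.take_take, List.drop_drop, List.append_assoc]
    simp

/-- Finite combinations of the basis. -/
def Rep (f : NSymA A) : Prop := ∃ L : List (ℚ × Sentence A), (∀ x ∈ L, IsSentence x.2) ∧ f = combo L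

theorem Rep_zero : Rep (0 : NSymA A) := ⟨[], by simp, by simp [combo]⟩

theorem Rep_add {f g : NSymA A} (hf : Rep f) (hg : Rep g) : Rep (f + g) := by
  obtain ⟨L, h1, rfl⟩ := hf
  obtain ⟨L', h1', rfl⟩ := hg
  refine ⟨L ++ L', ?_, (combo_append L L').symm⟩
  intro x hx
  rcases List.mem_append.1 hx with hx | hx
  · exact h1 x hx
  · exact h1' x hx

theorem Rep_Hd (I : Sentence A) (h : IsSentence I) : Rep (Hd I) :=
  ⟨[(1, I)], by simpa using h, by simp [combo]⟩

theorem Rep_smul {f : NSymA A} (hf : Rep f) (c : ℚ) : Rep (c • f) := by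
  obtain ⟨L, h1, rfl⟩ := hf
  refine ⟨L.map (fun x => (c * x.1, x.2)), ?_, ?_⟩
  · intro x hx
    obtain ⟨y, hy, rfl⟩ := List.mem_map.1 hx
    exact h1 y hy
  · simp only [combo, smul_sum, List.map_map, Function.comp_def, smul_smul]

theorem Rep_sum {ι : Type*} (L : List ι) (f : ι → NSymA A) (h : ∀ i ∈ L, Rep (f i)) :
    Rep (L.map f).sum := by
  induction L with
  | nil => exact Rep_zero
  | cons x L ih =>
    simp only [List.map_cons, List.sum_cons]
    exact Rep_add (h x (by simp)) (ih (fun i hi => h i (by simp [hi])))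

theorem IsSentence_append {I J : Sentence A} (h1 : IsSentence I) (h2 : IsSentence J) :
    IsSentence (I ++ J) := by
  intro x hx
  rcases List.mem_append.1 hx with hx | hx
  · exact h1 x hx
  · exact h2 x hx

theorem Rep_Bern (v : List A) {f : NSymA A} (hf : Rep f) : Rep (Bern v f) := by
  obtain ⟨L, h1, rfl⟩ := hf
  rw [Bern_combo' v L h1]
  refine Rep_sum _ _ (fun x _ => Rep_smul (Rep_sum _ _ (fun p _ => Rep_sum _ _ (fun Q _ => ?_))) _)
  rw [tm, Hw_eq, mulN_Hd]
  exact Rep_smul (Rep_Hd _ (IsSentence_append (flattenWS_sentence _) (flattenWS_sentence _))) _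

theorem Rep_ImmS (J : Sentence A) : Rep (ImmS J) := by
  induction J with
  | nil => exact Rep_Hd [] (by simp [IsSentence])
  | cons v J ih => exact Rep_Bern v ih

theorem Bern_add (v : List A) {f g : NSymA A} (hf : Rep f) (hg : Rep g) :
    Bern v (f + g) = Bern v f + Bern v g := by
  obtain ⟨L, h1, rfl⟩ := hf
  obtain ⟨L', h1', rfl⟩ := hg
  rw [← combo_append, Bern_combo' v _ h1, Bern_combo' v _ h1', Bern_combo' v (L ++ L')]
  · simp
  · intro x hx
    rcases List.mem_append.1 hx with hx | hx
    · exact h1 x hx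
    · exact h1' x hx

theorem Bern_zero (v : List A) : Bern v (0 : NSymA A) = 0 := by
  have := Bern_combo' v ([] : List (ℚ × Sentence A)) (by simp)
  simpa [combo] using this

theorem Bern_sum {ι : Type*} (v : List A) (L : List ι) (f : ι → NSymA A) (h : ∀ i ∈ L, Rep (f i)) :
    Bern v (L.map f).sum = (L.map (fun i => Bern v (f i))).sum := by
  induction L with
  | nil => simpa using Bern_zero v
  | cons x L ih =>
    have hL : ∀ i ∈ L, Rep (f i) := fun i hi => h i (by simp [hi])
    simp only [List.map_cons, List.sum_cons]
    rw [Bern_add v (h x (by simp)) (Rep_sum L f hL), ih hL]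

theorem D_flat (v : List A) (I : Sentence A) (a : List A) :
    D v (I ++ flattenWS [a]) = D v (I ++ [a]) := by
  cases a with
  | nil =>
    rw [D_snoc]
    simp [flattenWS, E_nil, Hw, mulN_Hd_nil]
  | cons b a => simp [flattenWS]

theorem step (v : List A) {f : NSymA A} (hf : Rep f) (w : List A) :
    mulN (Bern v f) (Hw w) = ((List.range (w.length + 1)).map (fun t =>
      Bern (v ++ w.drop t) (mulN f (Hw (w.take t))))).sum := by
  obtain ⟨L, h1, rfl⟩ := hf
  have h2 : ∀ a : List A, mulN (combo L) (Hw a) =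
      combo (L.map (fun x => (x.1, x.2 ++ flattenWS [a]))) := by
    intro a
    simp only [combo, mulN_sum_left, List.map_map, Function.comp_def, mulN_smul_left, Hw_eq, mulN_Hd]
  have h3 : ∀ u a : List A, Bern u (mulN (combo L) (Hw a)) =
      (L.map (fun x => x.1 • D u (x.2 ++ [a]))).sum := by
    intro u a
    rw [h2, Bern_combo']
    · simp only [List.map_map, Function.comp_def, D_flat]
    · intro x hx
      obtain ⟨y, hy, rfl⟩ := List.mem_map.1 hx
      exact IsSentence_append (h1 y hy) (flattenWS_sentence _)
  simp only [h3]
  rw [Bern_combo' v L h1, mulN_sum_left, sum_comm]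
  congr 1
  apply List.map_congr_left
  intro x _
  rw [mulN_smul_left, key, ← lsum_range, smul_sum]

/-! Pieri enumeration -/

/-- The sentences `K` with `J ⊂_w K`. -/
def pieriL : Sentence A → List A → List (Sentence A)
  | [], w => [flattenWS [w]]
  | v :: J, w => (List.range (w.length + 1)).flatMap (fun t =>
      (pieriL J (w.take t)).map (fun K => (v ++ w.drop t) :: K))

theorem nodup_pieriL (J : Sentence A) : ∀ w : List A, (pieriL J w).Nodup := by
  induction J with
  | nil => intro w; simp [pieriL]
  | cons v J ih =>
    intro w
    rw [pieriL, List.nodup_flatMap]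
    constructor
    · intro t _
      exact (ih _).map (fun _ _ h => (List.cons.inj h).2)
    · refine List.Pairwise.imp_of_mem ?_ (List.pairwise_lt_range (n := w.length + 1))
      intro t t' ht ht' hlt Q hQ hQ'
      rw [List.mem_range] at ht ht'
      simp only [List.mem_map] at hQ hQ'
      obtain ⟨Q1, _, rfl⟩ := hQ
      obtain ⟨Q2, _, h2⟩ := hQ'
      have := congrArg List.length (List.cons.inj h2).1
      simp at this
      omega

theorem pieri_cons (v : List A) (J : Sentence A) (w k : List A) (K : Sentence A) :
    PieriRel (v :: J) w (k :: K) ↔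
      ∃ t, t < w.length + 1 ∧ PieriRel J (w.take t) K ∧ k = v ++ w.drop t := by
  constructor
  · rintro ⟨h1, h2, q, hq, hw, h⟩
    cases q with
    | nil => simp at hq
    | cons q0 q =>
      have hw' : q.reverse.flatten ++ q0 = w := by simpa using hw
      refine ⟨q.reverse.flatten.length, ?_, ⟨by simpa using h1, by simpa using h2, q,
        by simpa using hq, ?_, ?_⟩, ?_⟩
      · have := congrArg List.length hw'
        rw [List.length_append] at this
        omega
      · rw [← hw', List.take_left]
      · intro j hj
        have := h (j + 1) (by simpa using hj)
        simpa using this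
      · have := h 0 (by simp)
        rw [← hw', List.drop_left]
        simpa using this
  · rintro ⟨t, ht, ⟨h1, h2, q, hq, hw, h⟩, rfl⟩
    refine ⟨by simpa using h1, by simpa using h2, w.drop t :: q, by simpa using hq, ?_, ?_⟩
    · simp [hw]
    · intro j hj
      cases j with
      | zero => simp
      | succ j => simpa using h j (by simpa using hj)

theorem mem_pieriL (J : Sentence A) (hJ : IsSentence J) : ∀ (w : List A) (K : Sentence A),
    (IsSentence K ∧ PieriRel J w K) ↔ K ∈ pieriL J w := by
  induction J with
  | nil =>
    intro w K
    simp only [pieriL, List.mem_singleton]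
    constructor
    · rintro ⟨hK, h1, h2, q, hq, hw, h⟩
      match K, q, hq, h2 with
      | [], [], _, _ => simp at hw; subst hw; simp [flattenWS]
      | [k], [q], _, _ =>
        have h0 := h 0 (by simp)
        simp at h0 hw
        subst h0
        subst hw
        rw [flattenWS_of _ hK]
    · rintro rfl
      refine ⟨flattenWS_sentence _, by simp, ?_⟩
      cases w with
      | nil => exact ⟨by simp [flattenWS], [], by simp [flattenWS], by simp, by simp [flattenWS]⟩
      | cons a w => exact ⟨by simp [flattenWS], [a :: w], by simp [flattenWS], by simp, by simp [flattenWS]⟩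
  | cons v J ih =>
    intro w K
    have hv : v ≠ [] := hJ v (by simp)
    have ih' := ih (fun x hx => hJ x (by simp [hx]))
    simp only [pieriL, List.mem_flatMap, List.mem_range, List.mem_map, ← ih']
    constructor
    · rintro ⟨hK, hP⟩
      cases K with
      | nil => have := hP.1; simp at this
      | cons k K =>
        rw [pieri_cons] at hP
        obtain ⟨t, ht, hP, rfl⟩ := hP
        exact ⟨t, ht, K, ⟨fun x hx => hK x (by simp [hx]), hP⟩, rfl⟩
    · rintro ⟨t, ht, K', ⟨hK, hP⟩, rfl⟩
      refine ⟨?_, (pieri_cons _ _ _ _ _).2 ⟨t, ht, hP, rfl⟩⟩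
      intro x hx
      rcases List.mem_cons.1 hx with rfl | hx
      · simp [hv]
      · exact hK x hx

theorem Bern_one (w : List A) : Bern w (Hd []) = Hw w := by
  have := Bern_combo' w [(1, ([] : Sentence A))] (by simp [IsSentence])
  simpa [combo, D, splitsOf, refsS, tm, flattenWS, mulN_Hd_nil] using this

theorem main_list (J : Sentence A) : ∀ w : List A,
    mulN (ImmS J) (Hw w) = ((pieriL J w).map ImmS).sum := by
  induction J with
  | nil =>
    intro w
    have h0 : ImmS ([] : Sentence A) = Hd [] := rfl
    rw [h0, Hw_eq, mulN_Hd]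
    cases w with
    | nil => simp [pieriL, flattenWS, ImmS]
    | cons a w => simp [pieriL, flattenWS, ImmS, Bern_one, Hw]
  | cons v J ih =>
    intro w
    have h0 : ∀ (u : List A) (K : Sentence A), ImmS (u :: K) = Bern u (ImmS K) := fun _ _ => rfl
    rw [h0, step v (Rep_ImmS J), pieriL, sum_flatMap]
    congr 1
    apply List.map_congr_left
    intro t _
    rw [ih, Bern_sum _ _ _ (fun K _ => Rep_ImmS K)]
    simp only [List.map_map, Function.comp_def, h0]

end Pieri
end ColoredImm

namespace ColoredImm

/-- Right Pieri rule for the colored immaculate functions.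
For a sentence `J` and a word `w`, `𝔖_J · H_w = Σ_{J ⊂_w K} 𝔖_K`, summed over all
sentences `K` with `J ⊂_w K`. -/
theorem statement12 {A : Type*} (J : Sentence A) (hJ : IsSentence J) (w : List A) :
    mulN (ImmS J) (Hw w) =
      ∑ᶠ K ∈ {K : Sentence A | IsSentence K ∧ PieriRel J w K}, ImmS K := by
  rw [Pieri.main_list J w, Pieri.finsum_mem_list _ _ (Pieri.nodup_pieriL J w)]
  exact fun K => Pieri.mem_pieriL J hJ w K

end ColoredImm
end
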